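/- (Henckell's theorem) Let S be a finite semigroup. A subset X of S is aperiodic-pointlike if and only if X belongs to Sat({{s} : s ∈ S}), the saturation of the collection of singleton subsets of S; that is, X is aperiodic-pointlike iff X belongs to every saturated collection of subsets of S that contains all singletons. -/

import Mathlib

open Pointwise

/-- The `n`-th power of an element of a semigroup, for `n ≥ 1` (with the junk value
`sgPow t 0 = t`). -/
def sgPow {T : Type} [Mul T] (t : T) : ℕ → T
  | 0 => t
  | 1 => t
  | (n+2) => sgPow t (n+1) * t

/-- A semigroup is aperiodic if for every element `t` there is `n ≥ 1` with
`t^(n+1) = t^n`. -/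
def IsAperiodic (T : Type) [Mul T] : Prop :=
  ∀ t : T, ∃ n, 1 ≤ n ∧ sgPow t (n + 1) = sgPow t n
/-- A relational morphism from `S` to `T`: a fully defined relation whose graph is
a subsemigroup of `S × T`. -/
def IsRelMorphism {S T : Type} [Mul S] [Mul T] (ρ : S → Set T) : Prop :=
  (∀ s, (ρ s).Nonempty) ∧ ∀ s s', ρ s * ρ s' ⊆ ρ (s * s')

/-- A subset `X` of a finite semigroup `S` is aperiodic-pointlike if every relational
morphism from `S` to a finite aperiodic semigroup `T` relates all of `X` to a single
element of `T`. -/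
def AperiodicPointlike {S : Type} [Semigroup S] (X : Set S) : Prop :=
  ∀ (T : Type) [Semigroup T] [Finite T], IsAperiodic T →
    ∀ ρ : S → Set T, IsRelMorphism ρ → ∃ t : T, X ⊆ {s : S | t ∈ ρ s}
/-- A collection `U` of subsets of a semigroup `S` is saturated if it is closed under
setwise products, under taking subsets, and under the operation sending `X ∈ U` to
`⋃_{k ≥ n} X^k` whenever `n ≥ 1` and the setwise power `X^n` is idempotent. -/
def Saturated {S : Type} [Semigroup S] (U : Set (Set S)) : Prop :=
  (∀ X ∈ U, ∀ Y ∈ U, X * Y ∈ U) ∧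
  (∀ X ∈ U, ∀ Y : Set S, Y ⊆ X → Y ∈ U) ∧
  (∀ X ∈ U, ∀ n, 1 ≤ n → sgPow X n * sgPow X n = sgPow X n → (⋃ k, ⋃ (_ : n ≤ k), sgPow X k) ∈ U)

/-- The saturation of a collection of subsets of `S`: the least saturated collection
containing it.  `X ∈ Sat U₀` iff `X` belongs to every saturated collection containing `U₀`. -/
def Sat {S : Type} [Semigroup S] (U₀ : Set (Set S)) : Set (Set S) :=
  {X | ∀ U : Set (Set S), Saturated U → U₀ ⊆ U → X ∈ U}


namespace HenckellProof

structure Good (M : Type) [Monoid M] [Preorder M] : Prop where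
  mono : ∀ a b c d : M, a ≤ b → c ≤ d → a * c ≤ b * d
  pi : ∃ π : M → M, (∀ x, ∃ n, ∀ k, n ≤ k → x ^ k ≤ π x) ∧
    ∀ u v c, u * c = c * v → π u * c = c * π v

def Aper (T : Type) [Monoid T] : Prop := ∀ t : T, ∃ n : ℕ, t ^ (n + 1) = t ^ n

/-! Local divisors. -/

def LD (M : Type) [Monoid M] (c : M) : Type :=
  {x : M // (∃ u, u * c = x) ∧ ∃ v, c * v = x}

namespace LD
variable {M : Type} [Monoid M] {c : M}

noncomputable def mul (x y : LD M c) : LD M c :=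
  ⟨x.2.1.choose * y.1, by
    obtain ⟨v, hv⟩ := x.2.2
    obtain ⟨u', hu'⟩ := y.2.1
    obtain ⟨v', hv'⟩ := y.2.2
    have h := x.2.1.choose_spec
    constructor
    · exact ⟨x.2.1.choose * u', by rw [mul_assoc, hu']⟩
    · exact ⟨v * v', by rw [← mul_assoc, hv, ← hv', ← mul_assoc, h]⟩⟩

lemma mul_val (x y : LD M c) (u : M) (hu : u * c = x.1) : (mul x y).1 = u * y.1 := by
  obtain ⟨v', hv'⟩ := y.2.2
  have := x.2.1.choose_spec
  show x.2.1.choose * y.1 = _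
  rw [← hv', ← mul_assoc, this, ← hu, mul_assoc]

noncomputable instance : Monoid (LD M c) where
  mul := mul
  one := ⟨c, ⟨1, one_mul c⟩, ⟨1, mul_one c⟩⟩
  mul_assoc x y z := by
    obtain ⟨u, hu⟩ := x.2.1
    obtain ⟨u', hu'⟩ := y.2.1
    apply Subtype.ext
    show (mul (mul x y) z).1 = (mul x (mul y z)).1
    rw [mul_val x _ u hu, mul_val y _ u' hu', mul_val (mul x y) z (u * u'), mul_assoc]
    rw [mul_val x _ u hu, mul_assoc, hu']
  one_mul x := by
    apply Subtype.ext
    refine (mul_val _ x 1 (one_mul c)).trans (one_mul _)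
  mul_one x := by
    obtain ⟨u, hu⟩ := x.2.1
    apply Subtype.ext
    exact (mul_val x _ u hu).trans hu

lemma val_mul (x y : LD M c) (u : M) (hu : u * c = x.1) : (x * y).1 = u * y.1 :=
  mul_val x y u hu

lemma val_one : (1 : LD M c).1 = c := rfl

lemma val_mul' (x y : LD M c) (v : M) (hv : c * v = y.1) : (x * y).1 = x.1 * v := by
  obtain ⟨u, hu⟩ := x.2.1
  rw [val_mul x y u hu, ← hv, ← hu, mul_assoc]

lemma val_pow (x : LD M c) (u : M) (hu : u * c = x.1) (k : ℕ) : (x ^ k).1 = u ^ k * c := by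
  induction k with
  | zero => simp [val_one]
  | succ k ih => rw [pow_succ', val_mul x _ u hu, ih, pow_succ', mul_assoc]

instance [Preorder M] : Preorder (LD M c) := Preorder.lift (fun x => x.1)

lemma le_iff [Preorder M] (x y : LD M c) : x ≤ y ↔ x.1 ≤ y.1 := Iff.rfl

instance [Finite M] : Finite (LD M c) := Subtype.finite

lemma card_lt [Finite M] (hc : ¬ IsUnit c) : Nat.card (LD M c) < Nat.card M := by
  refine Finite.card_subtype_lt (x := (1 : M)) ?_
  rintro ⟨⟨u, hu⟩, ⟨v, hv⟩⟩
  apply hc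
  refine ⟨⟨c, v, hv, ?_⟩, rfl⟩
  have : u = v := by
    calc u = u * (c * v) := by rw [hv, mul_one]
      _ = v := by rw [← mul_assoc, hu, one_mul]
  rw [← this, hu]

lemma good [Preorder M] (h : Good M) : Good (LD M c) := by
  refine ⟨?_, ?_⟩
  · intro a b d e hab hde
    rw [le_iff] at *
    obtain ⟨u, hu⟩ := a.2.1
    obtain ⟨v, hv⟩ := d.2.2
    obtain ⟨u', hu'⟩ := b.2.1
    calc (a * d).1 = a.1 * v := val_mul' a d v hv
      _ ≤ b.1 * v := h.mono _ _ _ _ hab le_rfl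
      _ = u' * d.1 := by rw [← hu', ← hv, mul_assoc]
      _ ≤ u' * e.1 := h.mono _ _ _ _ le_rfl hde
      _ = (b * e).1 := (val_mul b e u' hu').symm
  · obtain ⟨π, h1, h2⟩ := h.pi
    have key : ∀ (x : LD M c), ∃ y : LD M c, ∀ u v, u * c = x.1 → c * v = x.1 →
        y.1 = π u * c ∧ y.1 = c * π v := by
      intro x
      obtain ⟨u, hu⟩ := x.2.1
      obtain ⟨v, hv⟩ := x.2.2
      refine ⟨⟨π u * c, ⟨_, rfl⟩, ⟨π v, (h2 u v c (hu.trans hv.symm)).symm⟩⟩, ?_⟩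
      intro u' v' hu' hv'
      have e1 := h2 u v' c (hu.trans hv'.symm)
      have e2 := h2 u' v' c (hu'.trans hv'.symm)
      exact ⟨e1.trans e2.symm, e1⟩
    choose p hp using key
    refine ⟨p, ?_, ?_⟩
    · intro x
      obtain ⟨u, hu⟩ := x.2.1
      obtain ⟨v, hv⟩ := x.2.2
      obtain ⟨n, hn⟩ := h1 u
      refine ⟨n, fun k hk => ?_⟩
      rw [le_iff, val_pow x u hu, (hp x u v hu hv).1]
      exact h.mono _ _ _ _ (hn k hk) le_rfl
    · intro x y w hxy
      obtain ⟨u, hu⟩ := x.2.1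
      obtain ⟨v, hv⟩ := x.2.2
      obtain ⟨u', hu'⟩ := y.2.1
      obtain ⟨v', hv'⟩ := y.2.2
      apply Subtype.ext
      have e := congrArg Subtype.val hxy
      rw [val_mul x w u hu, val_mul' w y v' hv'] at e
      rw [val_mul (p x) w (π u) (hp x u v hu hv).1.symm,
        val_mul' w (p y) (π v') (hp y u' v' hu' hv').2.symm]
      exact h2 _ _ _ e

end LD

/-! The Rees-type extension. -/

inductive RX (T T' : Type) : Type
  | l : T → RX T T'
  | r : T → T' → T → RX T T'

namespace RX
variable {T T' : Type} [Monoid T] [Monoid T']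

/-- the extension with a given sandwich function -/
def Ext (_g : T → T') : Type := RX T T'

def mul (g : T → T') : RX T T' → RX T T' → RX T T'
  | l a, l b => l (a * b)
  | l a, r p x q => r (a * p) x q
  | r p x q, l b => r p x (q * b)
  | r p x q, r p' x' q' => r p (x * g (q * p') * x') q'

instance (g : T → T') : Monoid (Ext g) where
  mul := mul g
  one := l 1
  mul_assoc a b c := by
    show mul g (mul g a b) c = mul g a (mul g b c)
    cases a <;> cases b <;> cases c <;> simp [mul, mul_assoc]
  one_mul a := by
    show mul g (l 1) a = a
    cases a <;> simp [mul]
  mul_one a := by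
    show mul g a (l 1) = a
    cases a <;> simp [mul]

def mkl (g : T → T') (a : T) : Ext g := l a
def mkr (g : T → T') (p : T) (x : T') (q : T) : Ext g := r p x q

lemma ll (g : T → T') (a b : T) : mkl g a * mkl g b = mkl g (a * b) := rfl
lemma lr (g : T → T') (a p x q) : mkl g a * mkr g p x q = mkr g (a * p) x q := rfl
lemma rl (g : T → T') (a p x q) : mkr g p x q * mkl g a = mkr g p x (q * a) := rfl
lemma rr (g : T → T') (p x q p' x' q') :
    mkr g p x q * mkr g p' x' q' = mkr g p (x * g (q * p') * x') q' := rfl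
lemma one_def (g : T → T') : (1 : Ext g) = mkl g 1 := rfl

instance [Finite T] [Finite T'] (g : T → T') : Finite (Ext g) := by
  let F : T ⊕ (T × T' × T) → Ext g := fun z => match z with
    | .inl a => mkl g a
    | .inr (p, x, q) => mkr g p x q
  refine Finite.of_surjective F ?_
  intro z
  cases z with
  | l a => exact ⟨.inl a, rfl⟩
  | r p x q => exact ⟨.inr (p, x, q), rfl⟩

lemma aper (g : T → T') (h : Aper T) (h' : Aper T') : Aper (Ext g) := by
  intro z
  cases z with
  | l a =>
    obtain ⟨n, hn⟩ := h a
    refine ⟨n, ?_⟩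
    have : ∀ k, (mkl g a) ^ k = mkl g (a ^ k) := by
      intro k
      induction k with
      | zero => rw [pow_zero, pow_zero, one_def]
      | succ k ih => rw [pow_succ, ih, ll, pow_succ]
    show (mkl g a) ^ (n + 1) = (mkl g a) ^ n
    rw [this, this, hn]
  | r p x q =>
    obtain ⟨n, hn⟩ := h' (x * g (q * p))
    refine ⟨n + 1, ?_⟩
    have : ∀ k, (mkr g p x q) ^ (k + 1) = mkr g p ((x * g (q * p)) ^ k * x) q := by
      intro k
      induction k with
      | zero => simp
      | succ k ih => rw [pow_succ', ih, rr, pow_succ', mul_assoc, mul_assoc, mul_assoc]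
    show (mkr g p x q) ^ (n + 1 + 1) = (mkr g p x q) ^ (n + 1)
    rw [this, this, hn]

end RX

lemma units_bound (M : Type) [Monoid M] [Preorder M] [Finite M] (h : Good M) :
    ∃ m : M, ∀ u : M, IsUnit u → u ≤ m := by
  classical
  obtain ⟨π, h1, -⟩ := h.pi
  have hg : ∀ g : Mˣ, (1 : M) ≤ π g ∧ (g : M) ≤ π g := by
    intro g
    obtain ⟨n, hn⟩ := h1 g
    have hpos : 0 < orderOf g := orderOf_pos g
    have e : (g : M) ^ (orderOf g * n) = 1 := by
      rw [← Units.val_pow_eq_pow_val, pow_mul, pow_orderOf_eq_one]; simp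
    have hle : n ≤ orderOf g * n := Nat.le_mul_of_pos_left n hpos
    constructor
    · have := hn _ hle
      rwa [e] at this
    · have := hn (orderOf g * n + 1) (by omega)
      rwa [pow_succ, e, one_mul] at this
  have hfin : ∀ s : Finset Mˣ, ∃ m : M, 1 ≤ m ∧ ∀ g ∈ s, (g : M) ≤ m := by
    intro s
    induction s using Finset.induction_on with
    | empty => exact ⟨1, le_rfl, by simp⟩
    | insert g s _ ih =>
      obtain ⟨m, hm1, hm⟩ := ih
      refine ⟨m * π g, ?_, ?_⟩
      · simpa using h.mono 1 m 1 (π g) hm1 (hg g).1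
      · intro k hk
        rcases Finset.mem_insert.1 hk with rfl | hk
        · simpa using h.mono 1 m k (π k) hm1 (hg k).2
        · simpa using h.mono k m 1 (π g) (hm k hk) (hg g).1
  have := Fintype.ofFinite Mˣ
  obtain ⟨m, -, hm⟩ := hfin Finset.univ
  refine ⟨m, ?_⟩
  rintro _ ⟨u, rfl⟩
  exact hm u (Finset.mem_univ _)

def Concl (M : Type) [Monoid M] [Preorder M] (A : Type) (f : A → M) : Prop :=
  ∃ (T : Type) (_ : Monoid T) (_ : Finite T) (g : A → T), Aper T ∧
    ∀ t : T, ∃ m : M, ∀ w : FreeMonoid A, FreeMonoid.lift g w = t → FreeMonoid.lift f w ≤ m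

lemma step (M : Type) [Monoid M] [Preorder M] (h : Good M)
    (A : Type) (f : A → M) (c : A)
    (hB : Concl M {a : A // a ≠ c} (fun b => f b.1))
    (hL : ∀ (B : Type) [Finite B] (f' : B → LD M (f c)), Concl (LD M (f c)) B f') :
    Concl M A f := by
  classical
  obtain ⟨T, _, _, g, hT, hm⟩ := hB
  choose m hm using hm
  obtain ⟨T', _, _, g', hT', hn⟩ := hL T (fun t =>
    ⟨f c * m t * f c, ⟨_, rfl⟩, ⟨m t * f c, (mul_assoc _ _ _).symm⟩⟩)
  set f' : T → LD M (f c) := (fun t =>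
    ⟨f c * m t * f c, ⟨_, rfl⟩, ⟨m t * f c, (mul_assoc _ _ _).symm⟩⟩) with hf'
  choose n hn using hn
  set fB : {a : A // a ≠ c} → M := fun b => f b.1 with hfB
  let G : A → RX.Ext g' := fun a =>
    if ha : a = c then RX.mkr g' 1 1 1 else RX.mkl g' (g ⟨a, ha⟩)
  have hGc : G c = RX.mkr g' 1 1 1 := by simp [G]
  have hGb : ∀ a (ha : a ≠ c), G a = RX.mkl g' (g ⟨a, ha⟩) := by
    intro a ha; simp [G, ha]
  have inv : ∀ w : FreeMonoid A,
      (∃ v : FreeMonoid {a : A // a ≠ c}, FreeMonoid.lift G w = RX.mkl g' (FreeMonoid.lift g v) ∧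
        FreeMonoid.lift f w = FreeMonoid.lift fB v) ∨
      (∃ v v' : FreeMonoid {a : A // a ≠ c}, ∃ l : FreeMonoid T,
        FreeMonoid.lift G w = RX.mkr g' (FreeMonoid.lift g v) (FreeMonoid.lift g' l)
          (FreeMonoid.lift g v') ∧
        FreeMonoid.lift f w ≤ FreeMonoid.lift fB v * (FreeMonoid.lift f' l).1
          * FreeMonoid.lift fB v') := by
    intro w
    induction w using FreeMonoid.inductionOn' with
    | one => exact Or.inl ⟨1, by simp [RX.one_def], by simp⟩
    | of_mul a w ih =>
      by_cases ha : a = c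
      · subst ha
        right
        rcases ih with ⟨v, e1, e2⟩ | ⟨v, v', l, e1, e2⟩
        · refine ⟨1, v, 1, ?_, ?_⟩
          · rw [map_mul, e1, FreeMonoid.lift_eval_of, hGc, RX.rl]; simp
          · rw [map_mul, e2, FreeMonoid.lift_eval_of, map_one, map_one, LD.val_one, one_mul]
        · refine ⟨1, v', FreeMonoid.of (FreeMonoid.lift g v) * l, ?_, ?_⟩
          · rw [map_mul, e1, FreeMonoid.lift_eval_of, hGc, RX.rr]; simp
          · rw [map_mul, FreeMonoid.lift_eval_of, map_one, one_mul, map_mul,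
              FreeMonoid.lift_eval_of,
              LD.val_mul (f' _) _ (f a * m (FreeMonoid.lift g v)) rfl]
            refine (h.mono _ _ _ _ le_rfl e2).trans ?_
            rw [← mul_assoc, ← mul_assoc]
            refine h.mono _ _ _ _ (h.mono _ _ _ _ (h.mono _ _ _ _ le_rfl ?_) le_rfl) le_rfl
            exact hm _ _ rfl
      · rcases ih with ⟨v, e1, e2⟩ | ⟨v, v', l, e1, e2⟩
        · refine Or.inl ⟨FreeMonoid.of ⟨a, ha⟩ * v, ?_, ?_⟩
          · rw [map_mul, e1, FreeMonoid.lift_eval_of, hGb a ha, RX.ll, map_mul,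
              FreeMonoid.lift_eval_of]
          · rw [map_mul, e2, FreeMonoid.lift_eval_of, map_mul, FreeMonoid.lift_eval_of]
        · refine Or.inr ⟨FreeMonoid.of ⟨a, ha⟩ * v, v', l, ?_, ?_⟩
          · rw [map_mul, e1, FreeMonoid.lift_eval_of, hGb a ha, RX.lr, map_mul,
              FreeMonoid.lift_eval_of]
          · rw [map_mul, FreeMonoid.lift_eval_of, map_mul, FreeMonoid.lift_eval_of]
            refine (h.mono _ _ _ _ le_rfl e2).trans ?_
            rw [mul_assoc, mul_assoc, mul_assoc]
  refine ⟨RX.Ext g', inferInstance, inferInstance, G, RX.aper g' hT hT', ?_⟩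
  intro t
  cases t with
  | l t =>
    refine ⟨m t, fun w hw => ?_⟩
    rcases inv w with ⟨v, e1, e2⟩ | ⟨v, v', l, e1, e2⟩
    · rw [e2]
      apply hm
      have := e1.symm.trans hw
      exact RX.l.inj this
    · exact absurd (e1.symm.trans hw) (fun hh => RX.noConfusion rfl rfl (heq_of_eq hh))
  | r p x q =>
    refine ⟨m p * (n x).1 * m q, fun w hw => ?_⟩
    rcases inv w with ⟨v, e1, e2⟩ | ⟨v, v', l, e1, e2⟩
    · exact absurd (e1.symm.trans hw) (fun hh => RX.noConfusion rfl rfl (heq_of_eq hh))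
    · obtain ⟨h1, h2, h3⟩ := RX.r.inj (e1.symm.trans hw)
      refine e2.trans (h.mono _ _ _ _ (h.mono _ _ _ _ (hm _ _ h1) ?_) (hm _ _ h3))
      exact hn _ _ h2

lemma main_aux (N : ℕ) : ∀ (M : Type) [Monoid M] [Preorder M] [Finite M], Good M →
    Nat.card M = N → ∀ (k : ℕ) (A : Type) [Finite A] (f : A → M), Nat.card A = k →
      Concl M A f := by
  induction N using Nat.strong_induction_on with
  | _ N ihN =>
  intro M _ _ _ h hM k
  induction k using Nat.strong_induction_on with
  | _ k ihk =>
  intro A _ f hA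
  by_cases hu : ∀ a, IsUnit (f a)
  · obtain ⟨m, hm⟩ := units_bound M h
    refine ⟨Unit, inferInstance, inferInstance, fun _ => (), fun _ => ⟨0, rfl⟩, fun _ => ⟨m, ?_⟩⟩
    intro w _
    apply hm
    induction w using FreeMonoid.inductionOn' with
    | one => simp
    | of_mul a w ih => 
      rw [map_mul, FreeMonoid.lift_eval_of]
      exact (hu a).mul (ih rfl)
  · push Not at hu
    obtain ⟨c, hc⟩ := hu
    refine step M h A f c ?_ ?_
    · refine ihk (Nat.card {a : A // a ≠ c}) ?_ _ _ rfl
      rw [← hA]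
      exact Finite.card_subtype_lt (x := c) (by simp)
    · intro B _ f'
      refine ihN (Nat.card (LD M (f c))) ?_ (LD M (f c)) (LD.good h) rfl _ B f' rfl
      rw [← hM]
      exact LD.card_lt hc

lemma main (M : Type) [Monoid M] [Preorder M] [Finite M] (h : Good M)
    (A : Type) [Finite A] (f : A → M) : Concl M A f :=
  main_aux _ M h rfl _ A f rfl

/-! Powers. -/

lemma sgPow_succ {T : Type} [Mul T] (t : T) (n : ℕ) (hn : 1 ≤ n) :
    sgPow t (n + 1) = sgPow t n * t := by
  obtain ⟨n, rfl⟩ := Nat.exists_eq_add_of_le' hn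
  rfl

lemma sgPow_monoid {T : Type} [Monoid T] (t : T) (n : ℕ) (hn : 1 ≤ n) : sgPow t n = t ^ n := by
  induction n, hn using Nat.le_induction with
  | base => simp [sgPow]
  | succ n hn ih => rw [sgPow_succ t n hn, ih, pow_succ]

lemma sgPow_add {T : Type} [Semigroup T] (t : T) (a b : ℕ) (ha : 1 ≤ a) (hb : 1 ≤ b) :
    sgPow t (a + b) = sgPow t a * sgPow t b := by
  induction b, hb using Nat.le_induction with
  | base => rw [sgPow_succ t a ha]; rfl
  | succ b hb ih =>
    rw [← add_assoc, sgPow_succ t _ (by omega), ih, sgPow_succ t b hb, mul_assoc]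

lemma easy (S : Type) [Semigroup S] (X : Set S)
    (hX : X ∈ Sat {Y : Set S | ∃ s : S, Y = {s}}) : AperiodicPointlike X := by
  intro T _ _ hT ρ hρ
  refine hX {X | ∃ t : T, X ⊆ {s : S | t ∈ ρ s}} ⟨?_, ?_, ?_⟩ ?_
  · rintro X ⟨t, ht⟩ Y ⟨t', ht'⟩
    refine ⟨t * t', ?_⟩
    rintro _ ⟨x, hx, y, hy, rfl⟩
    exact hρ.2 x y (Set.mul_mem_mul (ht hx) (ht' hy))
  · rintro X ⟨t, ht⟩ Y hY
    exact ⟨t, hY.trans ht⟩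
  · rintro X ⟨t, ht⟩ n hn hid
    obtain ⟨m, hm, hm'⟩ := hT t
    refine ⟨sgPow t m, ?_⟩
    have hst : ∀ k, m ≤ k → sgPow t k = sgPow t m := by
      intro k hk
      induction k, hk using Nat.le_induction with
      | base => rfl
      | succ k hk ih => rw [sgPow_succ t k (by omega), ih, ← sgPow_succ t m hm, hm']
    have hpow : ∀ k, 1 ≤ k → sgPow X k ⊆ {s : S | sgPow t k ∈ ρ s} := by
      intro k hk
      induction k, hk using Nat.le_induction with
      | base => exact ht
      | succ k hk ih =>
        rw [sgPow_succ X k hk, sgPow_succ t k hk]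
        rintro _ ⟨x, hx, y, hy, rfl⟩
        exact hρ.2 x y (Set.mul_mem_mul (ih hx) (ht hy))
    have hper : ∀ k, n ≤ k → sgPow X (k + n) = sgPow X k := by
      intro k hk
      rcases hk.eq_or_lt with rfl | hlt
      · rw [sgPow_add X n n hn hn, hid]
      · obtain ⟨d, rfl⟩ := Nat.exists_eq_add_of_lt hlt
        rw [show n + d + 1 = (d + 1) + n by omega, sgPow_add X (d + 1 + n) n (by omega) hn,
          sgPow_add X (d + 1) n (by omega) hn, mul_assoc, hid]
    have hper' : ∀ j k, n ≤ k → sgPow X (k + n * j) = sgPow X k := by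
      intro j
      induction j with
      | zero => intro k _; rfl
      | succ j ih =>
        intro k hk
        rw [Nat.mul_succ, ← add_assoc, hper _ (by omega), ih k hk]
    intro s hs
    simp only [Set.mem_iUnion] at hs
    obtain ⟨k, hk, hs⟩ := hs
    rw [← hper' m k hk] at hs
    have h1 : m ≤ n * m := Nat.le_mul_of_pos_left m hn
    have := hpow _ (by omega) hs
    rwa [hst _ (by omega)] at this
  · rintro _ ⟨s, rfl⟩
    obtain ⟨t, ht⟩ := hρ.1 s
    exact ⟨t, by simpa using ht⟩

/-! Global idempotent exponent. -/

lemma exists_pow_idem {M : Type} [Monoid M] [Finite M] (x : M) :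
    ∃ n, 1 ≤ n ∧ ∀ j, x ^ (n * (j + 1)) = x ^ n := by
  obtain ⟨a, b, hab, e⟩ := Finite.exists_ne_map_eq_of_infinite (fun n : ℕ => x ^ n)
  wlog hlt : a < b generalizing a b
  · exact this b a hab.symm e.symm (by omega)
  obtain ⟨d, rfl⟩ := Nat.exists_eq_add_of_lt hlt
  have hp : ∀ j k, a ≤ k → x ^ (k + (d + 1) * j) = x ^ k := by
    intro j
    induction j with
    | zero => intro k _; simp
    | succ j ih =>
      intro k hk
      obtain ⟨r, rfl⟩ := Nat.exists_eq_add_of_le hk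
      have e' : x ^ a = x ^ (a + (d + 1)) := e
      calc x ^ (a + r + (d + 1) * (j + 1)) = x ^ (a + (d + 1)) * x ^ (r + (d + 1) * j) := by
            rw [← pow_add]; congr 1; ring
        _ = x ^ (a + r + (d + 1) * j) := by rw [← e', ← pow_add]; congr 1; ring
        _ = x ^ (a + r) := ih _ hk
  refine ⟨(d + 1) * (a + 1), Nat.mul_pos (by omega) (by omega), fun j => ?_⟩
  have := hp ((a + 1) * j) ((d + 1) * (a + 1)) (by nlinarith)
  rw [← this]; congr 1; ring

lemma exists_global {M : Type} [Monoid M] [Finite M] :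
    ∃ N, 1 ≤ N ∧ ∀ x : M, x ^ N * x ^ N = x ^ N := by
  classical
  have := Fintype.ofFinite M
  choose n hn h using (exists_pow_idem (M := M))
  refine ⟨∏ x, n x, Nat.succ_le_of_lt (Finset.prod_pos (fun x _ => hn x)), fun x => ?_⟩
  obtain ⟨d, hd⟩ := Finset.dvd_prod_of_mem n (Finset.mem_univ x)
  have hpos : 0 < ∏ x, n x := Finset.prod_pos (fun x _ => hn x)
  rw [hd] at hpos ⊢
  obtain ⟨d, rfl⟩ : ∃ e, d = e + 1 := Nat.exists_eq_succ_of_ne_zero (by rintro rfl; simp at hpos)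
  rw [h, ← pow_add, ← h x 1]
  congr 1; ring

/-! The hard direction. -/

section hard
variable {S : Type} [Semigroup S]

def emb (X : Set S) : Set (WithOne S) := (fun s : S => (s : WithOne S)) '' X

lemma emb_mul (X Y : Set S) : emb (X * Y) = emb X * emb Y := by
  ext z
  constructor
  · rintro ⟨_, ⟨x, hx, y, hy, rfl⟩, rfl⟩
    exact ⟨x, ⟨x, hx, rfl⟩, y, ⟨y, hy, rfl⟩, (WithOne.coe_mul x y).symm⟩
  · rintro ⟨_, ⟨x, hx, rfl⟩, _, ⟨y, hy, rfl⟩, rfl⟩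
    exact ⟨x * y, ⟨x, hx, y, hy, rfl⟩, WithOne.coe_mul x y⟩

lemma emb_inj {X Y : Set S} (h : emb X = emb Y) : X = Y :=
  Set.image_injective.2 WithOne.coe_injective h

lemma emb_pow (X : Set S) (n : ℕ) (hn : 1 ≤ n) : emb (sgPow X n) = emb X ^ n := by
  induction n, hn using Nat.le_induction with
  | base => rw [pow_one]; rfl
  | succ n hn ih => rw [sgPow_succ X n hn, emb_mul, ih, pow_succ]

def tail {R : Type} [Monoid R] (N : ℕ) (X : Set R) : Set R := ⋃ k, ⋃ (_ : N ≤ k), X ^ k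

lemma tail_mul {R : Type} [Monoid R] (N : ℕ) (u v c : Set R) (h : u * c = c * v) :
    tail N u * c = c * tail N v := by
  have hk : ∀ k : ℕ, u ^ k * c = c * v ^ k := by
    intro k
    induction k with
    | zero => simp
    | succ k ih => rw [pow_succ', mul_assoc, ih, ← mul_assoc, h, mul_assoc, pow_succ']
  unfold tail
  simp only [Set.iUnion_mul, Set.mul_iUnion, hk]

def UM (U : Set (Set S)) (hU : Saturated U) : Submonoid (Set (WithOne S)) where
  carrier := {Z | Z = 1 ∨ ∃ X ∈ U, Z = emb X}
  one_mem' := Or.inl rfl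
  mul_mem' := by
    rintro a b (rfl | ⟨X, hX, rfl⟩) (rfl | ⟨Y, hY, rfl⟩)
    · left; rw [mul_one]
    · right; exact ⟨Y, hY, one_mul _⟩
    · right; exact ⟨X, hX, mul_one _⟩
    · right; exact ⟨X * Y, hU.1 X hX Y hY, (emb_mul X Y).symm⟩

lemma UM_good [Finite S] (U : Set (Set S)) (hU : Saturated U) : Good (UM U hU) := by
  have : Finite (WithOne S) := inferInstanceAs (Finite (Option S))
  obtain ⟨N, hN, hid⟩ := exists_global (M := Set (WithOne S))
  refine ⟨?_, ?_⟩
  · intro a b c d hab hcd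
    exact Set.mul_subset_mul hab hcd
  · have hmem : ∀ Z ∈ UM U hU, tail N Z ∈ UM U hU := by
      rintro Z (rfl | ⟨X, hX, rfl⟩)
      · left
        unfold tail
        ext z
        simp only [one_pow, Set.mem_iUnion]
        exact ⟨fun ⟨_, _, h⟩ => h, fun h => ⟨N, le_rfl, h⟩⟩
      · right
        refine ⟨_, hU.2.2 X hX N hN ?_, ?_⟩
        · apply emb_inj
          rw [emb_mul, emb_pow X N hN, hid]
        · unfold tail
          refine Eq.trans ?_ (Set.image_iUnion).symm
          refine Set.iUnion_congr fun k => ?_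
          refine Eq.trans ?_ (Set.image_iUnion).symm
          refine Set.iUnion_congr fun hk => ?_
          exact (emb_pow X k (by omega)).symm
    refine ⟨fun Z => ⟨tail N Z.1, hmem Z.1 Z.2⟩, ?_, ?_⟩
    · intro Z
      refine ⟨N, fun k hk => ?_⟩
      show ((Z ^ k : UM U hU) : Set (WithOne S)) ⊆ tail N Z.1
      rw [SubmonoidClass.coe_pow]
      exact Set.subset_iUnion₂ (s := fun k (_ : N ≤ k) => Z.1 ^ k) k hk
    · intro u v c huc
      apply Subtype.ext
      exact tail_mul N u.1 v.1 c.1 (congrArg Subtype.val huc)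

lemma hard [Finite S] (X : Set S) (hX : AperiodicPointlike X) :
    X ∈ Sat {Y : Set S | ∃ s : S, Y = {s}} := by
  intro U hU hsing
  have : Finite (WithOne S) := inferInstanceAs (Finite (Option S))
  let f : S → UM U hU := fun s => ⟨emb {s}, Or.inr ⟨{s}, hsing ⟨s, rfl⟩, rfl⟩⟩
  obtain ⟨T, _, _, g, hT, hm⟩ := main (UM U hU) (UM_good U hU) S f
  have hev : ∀ w : FreeMonoid S, ((FreeMonoid.lift f w : UM U hU) : Set (WithOne S)) =
      {FreeMonoid.lift (fun s : S => (s : WithOne S)) w} := by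
    intro w
    induction w using FreeMonoid.inductionOn' with
    | one => simp; rfl
    | of_mul a w ih =>
      rw [map_mul, map_mul, FreeMonoid.lift_eval_of, FreeMonoid.lift_eval_of, Submonoid.coe_mul, ih]
      simp [f, emb]
  let ρ : S → Set T := fun s =>
    {t | ∃ w : FreeMonoid S, FreeMonoid.lift (fun s : S => (s : WithOne S)) w = s ∧
      FreeMonoid.lift g w = t}
  have hρ : IsRelMorphism ρ := by
    refine ⟨fun s => ⟨g s, FreeMonoid.of s, by simp, by simp⟩, ?_⟩
    rintro s s' _ ⟨_, ⟨w, h1, rfl⟩, _, ⟨w', h1', rfl⟩, rfl⟩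
    exact ⟨w * w', by rw [map_mul, h1, h1', WithOne.coe_mul], by rw [map_mul]⟩
  have hT' : IsAperiodic T := by
    intro t
    obtain ⟨n, hn⟩ := hT t
    refine ⟨n + 1, by omega, ?_⟩
    rw [sgPow_monoid t _ (by omega), sgPow_monoid t _ (by omega), pow_succ, hn, ← pow_succ, hn]
  by_cases hS : Nonempty S
  · obtain ⟨s₀⟩ := hS
    obtain ⟨t, ht⟩ := hX T hT' ρ hρ
    obtain ⟨m, hm⟩ := hm t
    have hsub : ∀ s ∈ X, (s : WithOne S) ∈ m.1 := by
      intro s hs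
      obtain ⟨w, h1, h2⟩ := ht hs
      have h3 : ((FreeMonoid.lift f w : UM U hU) : Set (WithOne S)) ⊆ m.1 := hm w h2
      rw [hev, h1] at h3
      exact h3 rfl
    rcases m.2 with h1 | ⟨Y, hY, h1⟩
    · refine hU.2.1 {s₀} (hsing ⟨s₀, rfl⟩) X ?_
      intro s hs
      have := hsub s hs
      rw [h1] at this
      exact absurd this (WithOne.coe_ne_one)
    · refine hU.2.1 Y hY X ?_
      intro s hs
      have := hsub s hs
      rw [h1] at this
      obtain ⟨y, hy, e⟩ := this
      rwa [← WithOne.coe_injective e]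
  · exfalso
    have := not_nonempty_iff.1 hS
    let : Semigroup Empty := { mul := fun a _ => a, mul_assoc := fun a => a.elim }
    obtain ⟨t, -⟩ := hX Empty (fun t => t.elim) (fun s => isEmptyElim s)
      ⟨fun s => isEmptyElim s, fun s => isEmptyElim s⟩
    exact t.elim

end hard

end HenckellProof

/-- Henckell's theorem.  A subset `X` of a finite semigroup `S` is
aperiodic-pointlike if and only if `X` belongs to the saturation of the collection of
singleton subsets of `S`. -/
theorem henckell_aperiodic_pointlikes
    (S : Type) [Semigroup S] [Finite S] (X : Set S) :
    AperiodicPointlike X ↔ X ∈ Sat {Y : Set S | ∃ s : S, Y = {s}} := by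
  exact ⟨HenckellProof.hard X, HenckellProof.easy S X⟩
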